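/- Let $0 < m < n$, let $R = \mathbb{Q}[t_1,\dots,t_n]$ be the polynomial ring in $n$ variables, and let $K$ be its field of fractions. Let $W \in \mathbb{Q}[x_1,\dots,x_m]$ be a symmetric polynomial which is homogeneous of degree exactly $m(n-m)$. For an $m$-element subset $\lambda \subseteq \{1,\dots,n\}$ write $W(t_\lambda)$ for the evaluation of $W$ at the family of variables $(t_i)_{i \in \lambda}$ (well defined by symmetry of $W$), and write $e_\lambda = \prod_{k \in \lambda,\; \ell \notin \lambda} (t_\ell - t_k)$. Then the element $\sum_{\lambda \subseteq \{1,\dots,n\},\ |\lambda| = m} \frac{W(t_\lambda)}{e_\lambda}$ of $K$ lies in the image of $\mathbb{Q}$ in $K$, i.e. it is a constant rational number independent of the variables. -/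

import Mathlib

open MvPolynomial

/-- The localization expression
`∑_{λ ⊆ {1,…,n}, |λ| = m} W(t_λ) / ∏_{k ∈ λ, ℓ ∉ λ} (t_ℓ - t_k)`,
viewed as an element of the field of fractions of `ℚ[t_1,…,t_n]`. -/
noncomputable def grassLocSum (m n : ℕ) (W : MvPolynomial (Fin m) ℚ) :
    FractionRing (MvPolynomial (Fin n) ℚ) :=
  ∑ s : {s : Finset (Fin n) // s.card = m},
    algebraMap (MvPolynomial (Fin n) ℚ) (FractionRing (MvPolynomial (Fin n) ℚ))
        (MvPolynomial.aeval (fun i => (X ↑(s.1.orderIsoOfFin s.2 i) : MvPolynomial (Fin n) ℚ)) W) /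
      algebraMap (MvPolynomial (Fin n) ℚ) (FractionRing (MvPolynomial (Fin n) ℚ))
        (∏ k ∈ s.1, ∏ l ∈ s.1ᶜ, (X l - X k))

namespace MvPolynomial

section Differences

variable {ι R : Type*} [CommRing R]

/-- Exchanging two variables does not change a polynomial modulo their difference. -/
theorem X_sub_X_dvd_sub_rename_swap [DecidableEq ι] (k l : ι) (p : MvPolynomial ι R) :
    X l - X k ∣ p - rename (Equiv.swap k l) p := by
  rw [← Ideal.mem_span_singleton, ← Ideal.Quotient.mk_eq_mk_iff_sub_mem]
  set I : Ideal (MvPolynomial ι R) := Ideal.span {X l - X k}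
  have hX : Ideal.Quotient.mk I (X l) = Ideal.Quotient.mk I (X k) :=
    Ideal.Quotient.mk_eq_mk_iff_sub_mem _ _ |>.2 (Ideal.mem_span_singleton_self _)
  have hom : Ideal.Quotient.mkₐ R I = (Ideal.Quotient.mkₐ R I).comp (rename (Equiv.swap k l)) := by
    refine algHom_ext fun i => ?_
    rcases eq_or_ne i k with rfl | hk
    · simp [hX]
    rcases eq_or_ne i l with rfl | hl
    · simp [hX]
    · simp [Equiv.swap_apply_of_ne_of_ne hk hl]
  exact DFunLike.congr_fun hom p

theorem irreducible_X_sub_X [IsDomain R] {k l : ι} (h : k ≠ l) :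
    Irreducible (X l - X k : MvPolynomial ι R) := by
  have := irreducible_mul_X_add (1 : MvPolynomial ι R) (-X k) l one_ne_zero (by simp)
    (by simpa using h.symm) isRelPrime_one_left
  simpa [sub_eq_add_neg] using this

theorem isRelPrime_X_sub_X [IsDomain R] {p q : ι × ι} (hp : p.1 ≠ p.2) (hq : q.1 ≠ q.2)
    (hpq : p ≠ q) (hswap : p.swap ≠ q) :
    IsRelPrime (X p.2 - X p.1 : MvPolynomial ι R) (X q.2 - X q.1) := by
  classical
  obtain ⟨k, l⟩ := p
  obtain ⟨k', l'⟩ := q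
  rw [(irreducible_X_sub_X hp).isRelPrime_iff_not_dvd]
  rintro ⟨r, hr⟩
  have h := congrArg (rename (R := R) (Function.update id l k)) hr
  simp only [map_sub, map_mul, rename_X, Function.update_self, Function.update_apply, id,
    sub_eq_zero, ite_self, sub_self, zero_mul] at h
  have h' := X_injective h
  simp only [ne_eq, Prod.mk.injEq, Prod.swap_prod_mk] at *
  grind

variable [IsDomain R]

/-- A product of differences of variables in which every unordered pair occurs at most once
divides any polynomial divisible by each factor. -/
theorem prod_X_sub_X_dvd {T : Finset (ι × ι)} (hne : ∀ p ∈ T, p.1 ≠ p.2)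
    (hswap : ∀ p ∈ T, p.swap ∉ T) [DecompositionMonoid (MvPolynomial ι R)] {P : MvPolynomial ι R}
    (hP : ∀ p ∈ T, X p.2 - X p.1 ∣ P) : ∏ p ∈ T, (X p.2 - X p.1) ∣ P := by
  refine Finset.prod_dvd_of_isRelPrime (fun p hp q hq hpq => ?_) hP
  exact isRelPrime_X_sub_X (hne p hp) (hne q hq) hpq fun h => hswap p hp (h ▸ hq)

end Differences

section Antisymmetric

variable {ι k : Type*} [DecidableEq ι] [Field k]

/-- A polynomial is antisymmetric if exchanging two variables changes its sign. -/
def IsAntisymmetric (P : MvPolynomial ι k) : Prop :=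
  ∀ i j : ι, i ≠ j → rename (Equiv.swap i j) P = -P

theorem IsAntisymmetric.X_sub_X_dvd [CharZero k] {P : MvPolynomial ι k} (hP : P.IsAntisymmetric) {i j : ι}
    (h : i ≠ j) : X j - X i ∣ P := by
  have hd := X_sub_X_dvd_sub_rename_swap i j P
  rw [hP i j h, sub_neg_eq_add, ← two_mul, ← map_ofNat (C : k →+* MvPolynomial ι k) 2] at hd
  have hu : IsUnit (C (2 : k) : MvPolynomial ι k) := (isUnit_iff_ne_zero.2 two_ne_zero).map C
  exact hu.dvd_mul_left.1 hd

theorem isAntisymmetric_det_vandermonde (n : ℕ) :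
    (Matrix.vandermonde (X : Fin n → MvPolynomial (Fin n) k)).det.IsAntisymmetric := by
  intro i j h
  have hM : (rename (Equiv.swap i j) : MvPolynomial (Fin n) k →ₐ[k] _).mapMatrix
      (Matrix.vandermonde X) = (Matrix.vandermonde X).submatrix (Equiv.swap i j) id := by
    ext a b : 2
    simp [Matrix.vandermonde_apply]
  rw [AlgHom.map_det, hM, Matrix.det_permute, Equiv.Perm.sign_swap h]
  simp

theorem IsAntisymmetric.det_vandermonde_dvd [CharZero k] {n : ℕ} {P : MvPolynomial (Fin n) k}
    (hP : P.IsAntisymmetric) :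
    (Matrix.vandermonde (X : Fin n → MvPolynomial (Fin n) k)).det ∣ P := by
  rw [Matrix.det_vandermonde, Finset.prod_sigma']
  rw [Finset.prod_bij' (t := Finset.univ.filter fun p : Fin n × Fin n => p.1 < p.2)
    (g := fun p => X p.2 - X p.1) (fun a _ => (a.1, a.2)) (fun p _ => ⟨p.1, p.2⟩)
    (by simp) (by simp) (by simp) (by simp) (by simp)]
  refine prod_X_sub_X_dvd (fun p hp => ?_) (fun p hp => ?_) fun p hp => hP.X_sub_X_dvd ?_ <;>
    simp only [Finset.mem_filter, Finset.mem_univ, true_and, Prod.fst_swap, Prod.snd_swap] at *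
  · exact hp.ne
  · exact hp.not_gt
  · exact hp.ne

theorem det_vandermonde_X_ne_zero (n : ℕ) :
    (Matrix.vandermonde (X : Fin n → MvPolynomial (Fin n) k)).det ≠ 0 :=
  Matrix.det_vandermonde_ne_zero_iff.2 X_injective

end Antisymmetric

/-- Renaming a symmetric polynomial along two maps that differ by a permutation of their
domain gives the same result. -/
theorem IsSymmetric.rename_comp {ι κ R : Type*} [CommSemiring R] {W : MvPolynomial ι R}
    (hW : W.IsSymmetric) (f : ι → κ) (e : Equiv.Perm ι) : rename (f ∘ e) W = rename f W := by
  rw [← rename_rename, hW e]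

end MvPolynomial

namespace GrassLoc

section Defs

variable (k : Type*) [Field k] {n : ℕ}

/-- The Euler class of the tangent space at the fixed point `s`. -/
noncomputable def euler (s : Finset (Fin n)) : MvPolynomial (Fin n) k :=
  ∏ i ∈ s, ∏ j ∈ sᶜ, (X j - X i)

theorem rename_euler (σ : Equiv.Perm (Fin n)) (s : Finset (Fin n)) :
    rename σ (euler k s) = euler k (s.map σ.toEmbedding) := by
  have hc : (s.map σ.toEmbedding)ᶜ = sᶜ.map σ.toEmbedding := by
    ext a
    simp [Finset.mem_map_equiv]
  simp [euler, hc]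

theorem euler_ne_zero (s : Finset (Fin n)) : euler k s ≠ 0 := by
  refine Finset.prod_ne_zero_iff.2 fun i hi => Finset.prod_ne_zero_iff.2 fun j hj => ?_
  refine sub_ne_zero.2 (X_injective.ne ?_)
  rintro rfl
  exact Finset.mem_compl.1 hj hi

theorem totalDegree_euler (s : Finset (Fin n)) :
    (euler k s).totalDegree = s.card * (n - s.card) := by
  have h : (euler k s).IsHomogeneous (∑ _i ∈ s, ∑ _j ∈ sᶜ, 1) :=
    IsHomogeneous.prod _ _ _ fun i _ => IsHomogeneous.prod _ _ _ fun j _ =>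
      (isHomogeneous_X k j).sub (isHomogeneous_X k i)
  rw [h.totalDegree (euler_ne_zero k s)]
  simp [Finset.card_compl]

theorem euler_dvd_det_vandermonde [CharZero k] (s : Finset (Fin n)) :
    euler k s ∣ (Matrix.vandermonde (X : Fin n → MvPolynomial (Fin n) k)).det := by
  rw [euler, ← Finset.prod_product' s sᶜ fun i j => (X j - X i : MvPolynomial (Fin n) k)]
  refine prod_X_sub_X_dvd (fun p hp => ?_) (fun p hp => ?_) fun p hp =>
    (isAntisymmetric_det_vandermonde n).X_sub_X_dvd ?_ <;>
    simp only [Finset.mem_product, Finset.mem_compl, Prod.fst_swap, Prod.snd_swap] at * <;> grind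

end Defs

section Restriction

variable {k : Type*} [Field k] {m n : ℕ}

/-- The evaluation of `W` at the variables indexed by `s`. -/
noncomputable def restrict (W : MvPolynomial (Fin m) k) (s : {s : Finset (Fin n) // s.card = m}) :
    MvPolynomial (Fin n) k :=
  rename (fun i => (s.1.orderIsoOfFin s.2 i : Fin n)) W

/-- The action of a permutation on the subsets of a given cardinality. -/
def permSubsets (m : ℕ) (σ : Equiv.Perm (Fin n)) :
    {s : Finset (Fin n) // s.card = m} ≃ {s : Finset (Fin n) // s.card = m} :=
  σ.finsetCongr.subtypeEquiv fun s => by simp [Equiv.finsetCongr_apply]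

theorem permSubsets_coe (σ : Equiv.Perm (Fin n)) (s : {s : Finset (Fin n) // s.card = m}) :
    (permSubsets m σ s).1 = s.1.map σ.toEmbedding := rfl

theorem rename_restrict {W : MvPolynomial (Fin m) k} (hW : W.IsSymmetric)
    (σ : Equiv.Perm (Fin n)) (s : {s : Finset (Fin n) // s.card = m}) :
    rename σ (restrict W s) = restrict W (permSubsets m σ s) := by
  let e : Equiv.Perm (Fin m) := (s.1.orderIsoOfFin s.2).toEquiv.trans <|
    (σ.subtypeEquiv fun a => by simp [permSubsets_coe] :
      {a // a ∈ s.1} ≃ {a // a ∈ (permSubsets m σ s).1}).trans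
      ((permSubsets m σ s).1.orderIsoOfFin (permSubsets m σ s).2).symm.toEquiv
  rw [restrict, restrict, rename_rename,
    ← hW.rename_comp (fun i => ((permSubsets m σ s).1.orderIsoOfFin _ i : Fin n)) e]
  congr 2
  ext i : 1
  simp only [e, Function.comp_apply, Equiv.trans_apply, RelIso.coe_fn_toEquiv,
    OrderIso.apply_symm_apply, Equiv.subtypeEquiv_apply]

end Restriction

end GrassLoc

open GrassLoc in
/-- Over the Vandermonde denominator, the numerator of the localization sum of a symmetric
polynomial is antisymmetric, so the sum is a polynomial; top degree forces it to be constant. -/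
theorem exists_sum_restrict_mul_eq_C_mul_det_vandermonde {k : Type*} [Field k] [CharZero k]
    {m n : ℕ} {W : MvPolynomial (Fin m) k} (hW : W.IsSymmetric)
    (hdeg : W.totalDegree ≤ m * (n - m))
    {N : {s : Finset (Fin n) // s.card = m} → MvPolynomial (Fin n) k}
    (hN : ∀ s, (Matrix.vandermonde (X : Fin n → MvPolynomial (Fin n) k)).det = euler k s.1 * N s) :
    ∃ q : k, ∑ s, restrict W s * N s =
      (Matrix.vandermonde (X : Fin n → MvPolynomial (Fin n) k)).det * C q := by
  set D := (Matrix.vandermonde (X : Fin n → MvPolynomial (Fin n) k)).det with hD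
  have hD0 : D ≠ 0 := det_vandermonde_X_ne_zero n
  have hanti : (∑ s, restrict W s * N s).IsAntisymmetric := by
    intro i j hij
    have hswap (s) : rename (Equiv.swap i j) (N s) = -N (permSubsets m (Equiv.swap i j) s) := by
      refine mul_left_cancel₀ (euler_ne_zero k (permSubsets m (Equiv.swap i j) s).1) ?_
      rw [mul_neg, ← hN, permSubsets_coe, ← rename_euler, ← map_mul, ← hN]
      exact isAntisymmetric_det_vandermonde n i j hij
    simp only [map_sum, map_mul, hswap, rename_restrict hW, mul_neg, Finset.sum_neg_distrib]
    rw [(permSubsets m (Equiv.swap i j)).sum_comp fun s => restrict W s * N s]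
  have hle : (∑ s, restrict W s * N s).totalDegree ≤ D.totalDegree := by
    refine totalDegree_finsetSum_le fun s _ => (totalDegree_mul _ _).trans ?_
    have hN0 : N s ≠ 0 := right_ne_zero_of_mul (hN s ▸ hD0)
    rw [hN s, totalDegree_mul_of_isDomain (euler_ne_zero k s.1) hN0, totalDegree_euler, s.2]
    exact Nat.add_le_add_right ((totalDegree_rename_le _ _).trans hdeg) _
  obtain ⟨Q, hQ⟩ := hanti.det_vandermonde_dvd
  rw [← hD] at hQ
  refine ⟨Q.coeff 0, ?_⟩
  rw [hQ]
  rcases eq_or_ne Q 0 with rfl | hQ0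
  · simp
  rw [hQ, totalDegree_mul_of_isDomain hD0 hQ0] at hle
  rw [← totalDegree_eq_zero_iff_eq_C.1 (show Q.totalDegree = 0 by omega)]

open GrassLoc in
theorem grassLocSum_top_degree_is_constant (m n : ℕ) (hm : 0 < m) (hmn : m < n)
    (W : MvPolynomial (Fin m) ℚ) (hWsymm : W.IsSymmetric)
    (hWhom : W.IsHomogeneous (m * (n - m))) :
    ∃ q : ℚ, grassLocSum m n W = (q : FractionRing (MvPolynomial (Fin n) ℚ)) := by
  choose N hN using fun s : {s : Finset (Fin n) // s.card = m} => euler_dvd_det_vandermonde ℚ s.1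
  obtain ⟨q, hq⟩ :=
    exists_sum_restrict_mul_eq_C_mul_det_vandermonde hWsymm hWhom.totalDegree_le hN
  refine ⟨q, ?_⟩
  have hinj := IsFractionRing.injective (MvPolynomial (Fin n) ℚ)
    (FractionRing (MvPolynomial (Fin n) ℚ))
  have hD0 := (map_ne_zero_iff _ hinj).2 (det_vandermonde_X_ne_zero (k := ℚ) n)
  refine mul_left_cancel₀ hD0 ?_
  have hC : algebraMap (MvPolynomial (Fin n) ℚ) (FractionRing (MvPolynomial (Fin n) ℚ)) (C q) = q :=
    eq_ratCast ((algebraMap _ _).comp C) q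
  rw [← hC, ← map_mul, ← hq, grassLocSum, Finset.mul_sum, map_sum]
  refine Finset.sum_congr rfl fun s _ => ?_
  have he := (map_ne_zero_iff _ hinj).2 (euler_ne_zero ℚ s.1)
  change _ * (_ / algebraMap _ _ (euler ℚ s.1)) = _
  rw [mul_div_assoc', div_eq_iff he, ← map_mul, ← map_mul, hN s]
  congr 1
  rw [restrict, rename_eq_aeval]
  simp only [Function.comp_def]
  ring
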